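/- Let f(φ) = 2·∑_{n=1}^∞ (-1)^{n-1} φ^{n-1} / (n³ · C(2n,n)) for complex φ with |φ| < 4, and let θ denote the operator (θg)(φ) = φ·g'(φ). Then f satisfies the fourth-order ordinary differential equation (4+φ)·(θ⁴f)(φ) + (10+4φ)·(θ³f)(φ) + (8+6φ)·(θ²f)(φ) + (2+4φ)·(θf)(φ) + φ·f(φ) = 0 for all φ with |φ| < 4. -/

import Mathlib

/-- The power series Π₀(φ) = 2·∑_{n=1}^∞ (-1)^{n-1} φ^{n-1} / (n³ · C(2n,n)). -/
noncomputable def Pi0 : ℂ → ℂ := fun φ =>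
  ∑' n : ℕ, 2 * (-1 : ℂ) ^ n * φ ^ n / (((n : ℂ) + 1) ^ 3 * (Nat.centralBinom (n + 1) : ℂ))

/-- The Euler operator θ = φ·d/dφ. -/
noncomputable def eulerOp (g : ℂ → ℂ) : ℂ → ℂ := fun φ => φ * deriv g φ

/-!
On a power series `∑ aₙ φⁿ` the operator `θ` multiplies `aₙ` by `n`, so `P(θ)` multiplies it by
`P(n)`, and `Q(θ) f + φ P(θ) f = 0` amounts to the two-term recurrence
`Q(n + 1) aₙ₊₁ + P(n) aₙ = 0` together with `Q(0) a₀ = 0`. Collecting powers of `φ`, the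
Picard–Fuchs operator is `Q(θ) + φ P(θ)` with `Q = 2X(X + 1)²(2X + 1)` and `P = (X + 1)⁴`, and the
recurrence is the one satisfied by `aₙ = 2(-1)ⁿ / ((n + 1)³ C(2n + 2, n + 1))`, by
`(n + 2) C(2n + 4, n + 2) = 2(2n + 3) C(2n + 2, n + 1)`.
-/

open Polynomial FormalMultilinearSeries Filter
open scoped ENNReal

section FormalSeries

variable {𝕜 E F : Type*} [NontriviallyNormedField 𝕜]
  [NormedAddCommGroup E] [NormedSpace 𝕜 E] [NormedAddCommGroup F] [NormedSpace 𝕜 F]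

theorem radius_le_radius_nsmul (p : FormalMultilinearSeries 𝕜 E F) :
    p.radius ≤ radius (fun n ↦ n • p n) := by
  refine ENNReal.le_of_forall_nnreal_lt fun r hr ↦ ?_
  obtain ⟨c, ⟨hc_pos, hc_lt⟩, hp⟩ := p.isLittleO_of_lt_radius hr
  have hbounded : (fun n : ℕ ↦ n * c ^ n) =O[atTop] fun _ ↦ (1 : ℝ) :=
    (tendsto_self_mul_const_pow_of_lt_one hc_pos.le hc_lt).isBigO_one ℝ
  refine le_radius_of_isBigO _ (.trans (.of_norm_le fun n ↦ ?_)
    (((Asymptotics.isBigO_refl (fun n : ℕ ↦ (n : ℝ)) atTop).mul hp.isBigO).trans hbounded))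
  rw [Real.norm_of_nonneg (by positivity), ← mul_assoc]
  gcongr
  exact norm_nsmul_le

theorem hasFPowerSeriesOnBall_fderiv_apply_self [CompleteSpace F] {f : E → F}
    {p : FormalMultilinearSeries 𝕜 E F} {r : ℝ≥0∞} (hf : HasFPowerSeriesOnBall f p 0 r) :
    HasFPowerSeriesOnBall (fun x ↦ fderiv 𝕜 f x x) (fun n ↦ n • p n) 0 r where
  r_le := hf.r_le.trans (radius_le_radius_nsmul p)
  r_pos := hf.r_pos
  hasSum {y} hy := by
    have hderiv : HasSum (fun n ↦ p.derivSeries n (fun _ ↦ y) y) (fderiv 𝕜 f (0 + y) y) :=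
      (hf.fderiv.hasSum hy).mapL (ContinuousLinearMap.apply 𝕜 F y)
    rw [← hasSum_nat_add_iff' 1]
    simpa [derivSeries_apply_diag] using hderiv

end FormalSeries

section EulerOp

variable {f : ℂ → ℂ} {a : ℕ → ℂ} {r : ℝ≥0∞}

theorem hasFPowerSeriesOnBall_eulerOp (hf : HasFPowerSeriesOnBall f (ofScalars ℂ a) 0 r) :
    HasFPowerSeriesOnBall (eulerOp f) (ofScalars ℂ fun n ↦ n * a n) 0 r := by
  have hfun : eulerOp f = fun z ↦ fderiv ℂ f z z := by
    ext z
    simp [eulerOp]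
  have hseries : ofScalars ℂ (fun n ↦ n * a n) = fun n ↦ n • ofScalars ℂ a n := by
    ext n
    simp [ofScalars]
  rw [hfun, hseries]
  exact hasFPowerSeriesOnBall_fderiv_apply_self hf

theorem hasFPowerSeriesOnBall_iterate_eulerOp
    (hf : HasFPowerSeriesOnBall f (ofScalars ℂ a) 0 r) (k : ℕ) :
    HasFPowerSeriesOnBall (eulerOp^[k] f) (ofScalars ℂ fun n ↦ (n : ℂ) ^ k * a n) 0 r := by
  induction k with
  | zero => simpa using hf
  | succ k ih =>
    rw [Function.iterate_succ_apply']
    simpa only [pow_succ', mul_assoc] using hasFPowerSeriesOnBall_eulerOp ih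

/-- The differential operator `P(θ)` attached to a polynomial `P` and the Euler operator `θ`,
applied to `f`. It is spelled out as a sum because `deriv` is not additive on arbitrary functions,
so that `θ` is not an element of an algebra at which `P` could be evaluated. -/
noncomputable def polynomialEulerOp (P : ℂ[X]) (f : ℂ → ℂ) : ℂ → ℂ :=
  fun z ↦ P.sum fun k c ↦ c * eulerOp^[k] f z

theorem polynomialEulerOp_add (P Q : ℂ[X]) (f : ℂ → ℂ) (z : ℂ) :
    polynomialEulerOp (P + Q) f z = polynomialEulerOp P f z + polynomialEulerOp Q f z :=
  sum_add_index _ _ _ (fun _ ↦ zero_mul _) fun _ _ _ ↦ add_mul _ _ _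

theorem polynomialEulerOp_monomial (k : ℕ) (c : ℂ) (f : ℂ → ℂ) (z : ℂ) :
    polynomialEulerOp (monomial k c) f z = c * eulerOp^[k] f z :=
  sum_monomial_index _ _ (zero_mul _)

theorem hasSum_polynomialEulerOp (hf : HasFPowerSeriesOnBall f (ofScalars ℂ a) 0 r) (P : ℂ[X])
    {z : ℂ} (hz : z ∈ Metric.eball 0 r) :
    HasSum (fun n : ℕ ↦ P.eval (n : ℂ) * a n * z ^ n) (polynomialEulerOp P f z) := by
  have hiterate (k : ℕ) : HasSum (fun n : ℕ ↦ (n : ℂ) ^ k * a n * z ^ n) (eulerOp^[k] f z) := by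
    simpa [ofScalars_apply_eq, mul_comm] using
      (hasFPowerSeriesOnBall_iterate_eulerOp hf k).hasSum hz
  simpa only [eval_eq_sum, polynomialEulerOp, Polynomial.sum, Finset.sum_mul, mul_assoc] using
    hasSum_sum fun k (_ : k ∈ P.support) ↦ (hiterate k).mul_left (P.coeff k)

theorem polynomialEulerOp_add_mul_eq_zero (hf : HasFPowerSeriesOnBall f (ofScalars ℂ a) 0 r)
    {P Q : ℂ[X]} (hzero : Q.eval 0 * a 0 = 0)
    (hrec : ∀ n : ℕ, Q.eval ((n : ℂ) + 1) * a (n + 1) + P.eval (n : ℂ) * a n = 0)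
    {z : ℂ} (hz : z ∈ Metric.eball 0 r) :
    polynomialEulerOp Q f z + z * polynomialEulerOp P f z = 0 := by
  have hQ : HasSum (fun n : ℕ ↦ Q.eval ((n : ℂ) + 1) * a (n + 1) * z ^ (n + 1))
      (polynomialEulerOp Q f z) := by
    simpa [hzero] using (hasSum_nat_add_iff' 1).2 (hasSum_polynomialEulerOp hf Q hz)
  have hP := (hasSum_polynomialEulerOp hf P hz).mul_left z
  refine (hQ.add hP).unique ?_
  convert! hasSum_zero with n
  linear_combination z ^ (n + 1) * hrec n

end EulerOp

/-- The `n`-th Taylor coefficient of `Pi0` at `0`; the index is shifted by one against the informal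
series, which starts at `n = 1`. -/
noncomputable def pi0Coeff (n : ℕ) : ℂ :=
  2 * (-1) ^ n / (((n : ℂ) + 1) ^ 3 * (n + 1).centralBinom)

theorem norm_pi0Coeff (n : ℕ) :
    ‖pi0Coeff n‖ = 2 / (((n : ℝ) + 1) ^ 3 * (n + 1).centralBinom) := by
  have hsucc : ‖(n : ℂ) + 1‖ = n + 1 := mod_cast Complex.norm_natCast (n + 1)
  simp [pi0Coeff, hsucc]

theorem norm_pi0Coeff_mul_four_pow_le_one (n : ℕ) : ‖pi0Coeff n‖ * 4 ^ n ≤ 1 := by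
  have hpos : (0 : ℝ) < (n + 1).centralBinom := mod_cast (n + 1).centralBinom_pos
  have hcentral : (4 : ℝ) ^ (n + 1) ≤ 2 * (n + 1) * (n + 1).centralBinom :=
    mod_cast Nat.four_pow_le_two_mul_self_mul_centralBinom (n + 1) n.succ_pos
  have hcube : (n : ℝ) + 1 ≤ (n + 1) ^ 3 := le_self_pow₀ (by simp) (by simp)
  rw [norm_pi0Coeff, div_mul_eq_mul_div, div_le_one (by positivity)]
  calc (2 : ℝ) * 4 ^ n = 4 ^ (n + 1) / 2 := by ring
    _ ≤ (n + 1) * (n + 1).centralBinom := by linarith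
    _ ≤ (n + 1) ^ 3 * (n + 1).centralBinom := by gcongr

theorem hasFPowerSeriesOnBall_Pi0 :
    HasFPowerSeriesOnBall Pi0 (ofScalars ℂ pi0Coeff) 0 4 := by
  have hradius : 4 ≤ (ofScalars ℂ pi0Coeff).radius :=
    le_radius_of_bound (r := 4) _ 1 fun n ↦ by
      simpa using norm_pi0Coeff_mul_four_pow_le_one n
  have hsum : (ofScalars ℂ pi0Coeff).sum = Pi0 := by
    ext z
    refine tsum_congr fun n ↦ ?_
    rw [ofScalars_apply_eq, smul_eq_mul, pi0Coeff, div_mul_eq_mul_div]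
  have hpos : (0 : ℝ≥0∞) < 4 := by simp
  exact hsum ▸ ((ofScalars ℂ pi0Coeff).hasFPowerSeriesOnBall (hpos.trans_le hradius)).mono
    hpos hradius

theorem pi0Coeff_succ (n : ℕ) :
    2 * ((n : ℂ) + 2) ^ 2 * (2 * n + 3) * pi0Coeff (n + 1) = -((n : ℂ) + 1) ^ 3 * pi0Coeff n := by
  have hcentral : ((n : ℂ) + 2) * (n + 2).centralBinom =
      2 * (2 * n + 3) * (n + 1).centralBinom := by
    have hnat := congrArg (Nat.cast (R := ℂ)) (Nat.succ_mul_centralBinom_succ (n + 1))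
    push_cast at hnat
    linear_combination hnat
  have hcentral₁ : ((n + 1).centralBinom : ℂ) ≠ 0 := mod_cast (n + 1).centralBinom_ne_zero
  have hcentral₂ : ((n + 2).centralBinom : ℂ) ≠ 0 := mod_cast (n + 2).centralBinom_ne_zero
  have hsucc : (n : ℂ) + 1 ≠ 0 := n.cast_add_one_ne_zero
  have hsucc₂ : (n : ℂ) + 2 ≠ 0 := mod_cast (n + 1).succ_ne_zero
  have hcast : ((n + 1 : ℕ) : ℂ) + 1 = n + 2 := by push_cast; ring
  rw [pi0Coeff, pi0Coeff, hcast, pow_succ]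
  field_simp
  linear_combination (-1 : ℂ) ^ n * hcentral

/-- Π₀ satisfies the Picard-Fuchs equation
(4+φ)θ⁴Π₀ + (10+4φ)θ³Π₀ + (8+6φ)θ²Π₀ + (2+4φ)θΠ₀ + φΠ₀ = 0 on the disc |φ| < 4. -/
theorem Pi0_satisfies_picard_fuchs :
    ∀ φ : ℂ, ‖φ‖ < 4 →
      (4 + φ) * eulerOp (eulerOp (eulerOp (eulerOp Pi0))) φ
        + (10 + 4 * φ) * eulerOp (eulerOp (eulerOp Pi0)) φ
        + (8 + 6 * φ) * eulerOp (eulerOp Pi0) φ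
        + (2 + 4 * φ) * eulerOp Pi0 φ
        + φ * Pi0 φ = 0 := by
  intro φ hφ
  let Q : ℂ[X] := monomial 4 4 + monomial 3 10 + monomial 2 8 + monomial 1 2
  let P : ℂ[X] := monomial 4 1 + monomial 3 4 + monomial 2 6 + monomial 1 4 + monomial 0 1
  have hQ (x : ℂ) : Q.eval x = 2 * x * (x + 1) ^ 2 * (2 * x + 1) := by
    simp only [Q, eval_add, eval_monomial]; ring
  have hP (x : ℂ) : P.eval x = (x + 1) ^ 4 := by
    simp only [P, eval_add, eval_monomial]; ring
  have hrec (n : ℕ) :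
      Q.eval ((n : ℂ) + 1) * pi0Coeff (n + 1) + P.eval (n : ℂ) * pi0Coeff n = 0 := by
    rw [hQ, hP]
    linear_combination ((n : ℂ) + 1) * pi0Coeff_succ n
  have hball : φ ∈ Metric.eball (0 : ℂ) 4 := by
    simpa [← ofReal_norm, ENNReal.ofReal_lt_ofNat] using hφ
  have hode := polynomialEulerOp_add_mul_eq_zero hasFPowerSeriesOnBall_Pi0 (by simp [hQ]) hrec hball
  simp only [Q, P, polynomialEulerOp_add, polynomialEulerOp_monomial, Function.iterate_succ_apply,
    Function.iterate_zero_apply] at hode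
  linear_combination hode
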